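/- arXiv:2109.07803 — 2 statements merged into one kernel-verified Lean document; each statement's English description precedes it below -/
import Mathlib

section
/- Fix n : ℕ and any model structure on the category [n]. Then the weak equivalences are stable under pushout and pullback along arbitrary morphisms: if x ≤ y and the morphism x ⟶ y is a weak equivalence, then (i) for every a with x ≤ a, the morphism a ⟶ max(a, y) (the pushout of x ⟶ y along x ⟶ a) is a weak equivalence, and (ii) for every b with b ≤ y, the morphism min(b, x) ⟶ b (the pullback of x ⟶ y along b ⟶ y) is a weak equivalence. In particular, every model structure on [n] is left and right proper. -/
universe v u

open CategoryTheory

section ModelDefs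

variable {C : Type u} [Category.{v} C]

/-- `f` is a retract of `g` in the arrow category of `C`. -/
def IsRetractOfHom {X Y X' Y' : C} (f : X ⟶ Y) (g : X' ⟶ Y') : Prop :=
  ∃ (a : X ⟶ X') (b : Y ⟶ Y') (a' : X' ⟶ X) (b' : Y' ⟶ Y),
    a ≫ a' = 𝟙 X ∧ b ≫ b' = 𝟙 Y ∧ f ≫ b = a ≫ g ∧ g ≫ b' = a' ≫ f

/-- A class of morphisms is stable under retracts (in the arrow category). -/
def StableUnderRetractsHom (P : MorphismProperty C) : Prop :=
  ∀ ⦃X Y X' Y' : C⦄ (f : X ⟶ Y) (g : X' ⟶ Y'), IsRetractOfHom f g → P g → P f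

/-- A (Quillen) model structure on a category `C`: three classes of morphisms —
weak equivalences, fibrations, cofibrations — each closed under composition and
retracts, the weak equivalences satisfying two-out-of-three, cofibrations
(resp. acyclic cofibrations) having the left lifting property against acyclic
fibrations (resp. fibrations), and every morphism factoring as a cofibration
followed by an acyclic fibration and as an acyclic cofibration followed by a
fibration. A model category is a category with all finite limits and colimits
equipped with such a structure. -/
structure ModelStructure (C : Type u) [Category.{v} C] where
  weq : MorphismProperty C
  fib : MorphismProperty C
  cof : MorphismProperty C
  weq_comp : weq.IsStableUnderComposition
  fib_comp : fib.IsStableUnderComposition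
  cof_comp : cof.IsStableUnderComposition
  weq_retract : StableUnderRetractsHom weq
  fib_retract : StableUnderRetractsHom fib
  cof_retract : StableUnderRetractsHom cof
  weq_two_out_of_three : weq.HasTwoOutOfThreeProperty
  lift_cof_trivFib : ∀ ⦃A B X Y : C⦄ (i : A ⟶ B) (p : X ⟶ Y),
    cof i → fib p → weq p → HasLiftingProperty i p
  lift_trivCof_fib : ∀ ⦃A B X Y : C⦄ (i : A ⟶ B) (p : X ⟶ Y),
    cof i → weq i → fib p → HasLiftingProperty i p
  factor_cof_trivFib : ∀ ⦃X Y : C⦄ (f : X ⟶ Y),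
    ∃ (Z : C) (i : X ⟶ Z) (p : Z ⟶ Y), cof i ∧ fib p ∧ weq p ∧ i ≫ p = f
  factor_trivCof_fib : ∀ ⦃X Y : C⦄ (f : X ⟶ Y),
    ∃ (Z : C) (i : X ⟶ Z) (p : Z ⟶ Y), cof i ∧ weq i ∧ fib p ∧ i ≫ p = f

end ModelDefs

/-!
A weak equivalence `x ≤ y` factors as an acyclic cofibration `x ≤ z` followed by an acyclic
fibration `z ≤ y`. A point `a` of `[x, y]` is comparable with `z`: if `a ≤ z`, then `a ≤ z` is the
pushout of `x ≤ z` along `x ≤ a`, hence an acyclic cofibration; if `z ≤ a`, then `z ≤ a` is the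
pullback of `z ≤ y` along `a ≤ y`, hence an acyclic fibration. In both cases two-out-of-three makes
`a ≤ y`, and then `x ≤ a`, a weak equivalence. This is enough, because a pushout (pullback) of
`x ≤ y` in a linear order is either an identity or of the form `a ≤ y` (`x ≤ a`).
-/

lemma isPushout_sup {α : Type u} [SemilatticeSup α] {x a b : α} (f : x ⟶ a) (g : x ⟶ b) :
    IsPushout f g (homOfLE (le_sup_left : a ≤ a ⊔ b)) (homOfLE le_sup_right) where
  w := Subsingleton.elim _ _
  isColimit' := ⟨Limits.PushoutCocone.IsColimit.mk _
    (fun s ↦ homOfLE (sup_le (leOfHom s.inl) (leOfHom s.inr)))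
    (fun _ ↦ Subsingleton.elim _ _) (fun _ ↦ Subsingleton.elim _ _)
    (fun _ _ _ _ ↦ Subsingleton.elim _ _)⟩

lemma isPullback_inf {α : Type u} [SemilatticeInf α] {a b y : α} (f : a ⟶ y) (g : b ⟶ y) :
    IsPullback (homOfLE (inf_le_left : a ⊓ b ≤ a)) (homOfLE inf_le_right) f g where
  w := Subsingleton.elim _ _
  isLimit' := ⟨Limits.PullbackCone.IsLimit.mk _
    (fun s ↦ homOfLE (le_inf (leOfHom s.fst) (leOfHom s.snd)))
    (fun _ ↦ Subsingleton.elim _ _) (fun _ ↦ Subsingleton.elim _ _)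
    (fun _ _ _ _ ↦ Subsingleton.elim _ _)⟩

lemma StableUnderRetractsHom.isStableUnderRetracts {C : Type u} [Category.{v} C]
    {P : MorphismProperty C} (hP : StableUnderRetractsHom P) : P.IsStableUnderRetracts where
  of_retract h hg := hP _ _ ⟨h.i.left, h.i.right, h.r.left, h.r.right,
    h.retract_left, h.retract_right, h.i_w.symm, h.r_w.symm⟩ hg

namespace ModelStructure

open MorphismProperty

section Category

variable {C : Type u} [Category.{v} C] (M : ModelStructure C)

/-- The acyclic cofibrations of a model structure, the left class of one of its two weak
factorization systems. An `abbrev`, so that instances for `⊓` apply. -/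
abbrev trivCof : MorphismProperty C := M.cof ⊓ M.weq

/-- The acyclic fibrations of a model structure, the right class of the other weak factorization
system. An `abbrev`, so that instances for `⊓` apply. -/
abbrev trivFib : MorphismProperty C := M.fib ⊓ M.weq

instance weq_hasTwoOutOfThreeProperty : M.weq.HasTwoOutOfThreeProperty :=
  M.weq_two_out_of_three

instance weq_isStableUnderRetracts : M.weq.IsStableUnderRetracts :=
  M.weq_retract.isStableUnderRetracts

instance fib_isStableUnderRetracts : M.fib.IsStableUnderRetracts :=
  M.fib_retract.isStableUnderRetracts

instance cof_isStableUnderRetracts : M.cof.IsStableUnderRetracts :=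
  M.cof_retract.isStableUnderRetracts

instance hasFactorization_trivCof_fib : HasFactorization M.trivCof M.fib where
  nonempty_mapFactorizationData f :=
    let ⟨Z, i, p, hi, hi', hp, fac⟩ := M.factor_trivCof_fib f
    ⟨{ Z := Z, i := i, p := p, fac := fac, hi := ⟨hi, hi'⟩, hp := hp }⟩

instance hasFactorization_cof_trivFib : HasFactorization M.cof M.trivFib where
  nonempty_mapFactorizationData f :=
    let ⟨Z, i, p, hi, hp, hp', fac⟩ := M.factor_cof_trivFib f
    ⟨{ Z := Z, i := i, p := p, fac := fac, hi := hi, hp := ⟨hp, hp'⟩ }⟩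

instance isWeakFactorizationSystem_trivCof_fib :
    IsWeakFactorizationSystem M.trivCof M.fib :=
  .mk' _ _ fun i p hi hp ↦ M.lift_trivCof_fib i p hi.1 hi.2 hp

instance isWeakFactorizationSystem_cof_trivFib :
    IsWeakFactorizationSystem M.cof M.trivFib :=
  .mk' _ _ fun i p hi hp ↦ M.lift_cof_trivFib i p hi hp.1 hp.2

instance trivCof_isStableUnderCobaseChange : M.trivCof.IsStableUnderCobaseChange := by
  rw [← llp_eq_of_wfs M.trivCof M.fib]
  infer_instance

instance trivFib_isStableUnderBaseChange : M.trivFib.IsStableUnderBaseChange := by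
  rw [← rlp_eq_of_wfs M.cof M.trivFib]
  infer_instance

instance trivCof_containsIdentities : M.trivCof.ContainsIdentities := by
  rw [← llp_eq_of_wfs M.trivCof M.fib]
  infer_instance

instance weq_containsIdentities : M.weq.ContainsIdentities where
  id_mem X := (M.trivCof.id_mem X).2

variable {M} in
lemma exists_trivCof_trivFib_fac_of_weq {X Y : C} {f : X ⟶ Y} (hf : M.weq f) :
    ∃ (Z : C) (i : X ⟶ Z) (p : Z ⟶ Y), M.trivCof i ∧ M.trivFib p ∧ i ≫ p = f := by
  obtain ⟨Z, i, p, hi, hi', hp, rfl⟩ := M.factor_trivCof_fib f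
  exact ⟨Z, i, p, ⟨hi, hi'⟩, ⟨hp, M.weq.of_precomp i p hi' hf⟩, rfl⟩

end Category

section LinearOrder

variable {α : Type u} [LinearOrder α] {M : ModelStructure α}

lemma weq_right_of_weq_comp {x a y : α} (f : x ⟶ a) (g : a ⟶ y) (hfg : M.weq (f ≫ g)) :
    M.weq g := by
  obtain ⟨z, i, p, hi, hp, -⟩ := exists_trivCof_trivFib_fac_of_weq hfg
  rcases le_total a z with haz | hza
  · have f_epi : epimorphisms α f := ⟨fun _ _ _ ↦ Subsingleton.elim _ _⟩
    have haz_triv : M.trivCof (homOfLE haz) := M.trivCof.of_precomp f _ f_epi hi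
    exact M.weq.comp_mem (homOfLE haz) p haz_triv.2 hp.2
  · have g_mono : monomorphisms α g := ⟨fun _ _ _ ↦ Subsingleton.elim _ _⟩
    have hza_triv : M.trivFib (homOfLE hza) := M.trivFib.of_postcomp _ g g_mono hp
    exact M.weq.of_precomp (homOfLE hza) g hza_triv.2 hp.2

lemma weq_left_of_weq_comp {x a y : α} (f : x ⟶ a) (g : a ⟶ y) (hfg : M.weq (f ≫ g)) :
    M.weq f :=
  M.weq.of_postcomp f g (weq_right_of_weq_comp f g hfg) hfg

instance weq_isStableUnderCobaseChange : M.weq.IsStableUnderCobaseChange where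
  of_isPushout {x y a b f g f' g'} sq hf := by
    rcases le_total a y with hay | hya
    · obtain rfl : y = b := le_antisymm (leOfHom g')
        (leOfHom (sq.desc (homOfLE hay) (𝟙 y) (Subsingleton.elim _ _)))
      exact weq_right_of_weq_comp g f' hf
    · obtain rfl : a = b := le_antisymm (leOfHom f')
        (leOfHom (sq.desc (𝟙 a) (homOfLE hya) (Subsingleton.elim _ _)))
      exact M.weq.id_mem a

instance weq_isStableUnderBaseChange : M.weq.IsStableUnderBaseChange where
  of_isPullback {b x a y g f g' f'} sq hf := by
    rcases le_total x b with hxb | hbx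
    · obtain rfl : x = a := le_antisymm
        (leOfHom (sq.lift (𝟙 x) (homOfLE hxb) (Subsingleton.elim _ _))) (leOfHom g')
      exact weq_left_of_weq_comp f' g hf
    · obtain rfl : b = a := le_antisymm
        (leOfHom (sq.lift (homOfLE hbx) (𝟙 b) (Subsingleton.elim _ _))) (leOfHom f')
      exact M.weq.id_mem b

end LinearOrder

end ModelStructure

theorem weq_stable_under_pushout_pullback_general {α : Type u} [LinearOrder α]
    (M : ModelStructure α) (x y : α) (hxy : x ≤ y) (hw : M.weq (homOfLE hxy)) :
    (∀ a : α, x ≤ a → M.weq (homOfLE (le_max_left a y))) ∧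
    (∀ b : α, b ≤ y → M.weq (homOfLE (min_le_left b x))) :=
  ⟨fun _ hxa ↦ M.weq.of_isPushout (isPushout_sup (homOfLE hxa) (homOfLE hxy)) hw,
    fun _ hby ↦ M.weq.of_isPullback (isPullback_inf (homOfLE hby) (homOfLE hxy)).flip hw⟩

/-- In any model structure on `[n]`, weak equivalences are stable under
pushout (computed by `max`) and pullback (computed by `min`) along arbitrary
morphisms; in particular every model structure on `[n]` is proper. -/
theorem weq_stable_under_pushout_pullback (n : ℕ)
    (M : ModelStructure (Fin (n + 1)))
    (x y : Fin (n + 1)) (hxy : x ≤ y) (hw : M.weq (homOfLE hxy)) :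
    (∀ (a : Fin (n + 1)), x ≤ a → M.weq (homOfLE (le_max_left a y))) ∧
    (∀ (b : Fin (n + 1)), b ≤ y → M.weq (homOfLE (min_le_left b x))) :=
  weq_stable_under_pushout_pullback_general M x y hxy hw
end

section
/- Fix n : ℕ and 0 ≤ k ≤ n. Let N be the number of model structures on the category [n] whose homotopy category — the localization of [n] at the class of weak equivalences — is equivalent, as a category, to the poset category [k]. Then (n + k + 2) · N = 2(k + 1) · C(2n+1, n−k). -/
universe v u

open CategoryTheory

/-!
A model structure on a finite linear order is determined by two pieces of data: the largest element
`reach a` that is the target of an acyclic fibration out of `a`, and the set `ends` of the largest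
elements of the weak equivalence classes. These classes are intervals, so sending an element to the
end of its class is a reflection onto `ends` that inverts exactly the weak equivalences; hence the
homotopy category is the linear order `ends`.

Deleting the bottom element and recording `reach 0` as an additional end shows that the number
`T m j` of structures on an `m`-element order with `j` ends satisfies the recurrence
`T (m + 1) (j + 1) = T m j + 2 * T m (j + 1) + T m (j + 2)` of Shapiro's Catalan triangle, whose
entries are differences of adjacent binomial coefficients.
-/

section Preorder

variable {α : Type u} [Preorder α]

theorem hasLiftingProperty_iff_of_preorder {a b x y : α} (i : a ⟶ b) (p : x ⟶ y) :
    HasLiftingProperty i p ↔ (a ≤ x → b ≤ y → b ≤ x) := by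
  refine ⟨fun h hax hby => ?_, fun h => ⟨fun {u v} _ => ?_⟩⟩
  · have sq : CommSq (homOfLE hax) i p (homOfLE hby) := ⟨Subsingleton.elim _ _⟩
    have := h.sq_hasLift sq
    exact sq.lift.le
  · exact ⟨⟨⟨homOfLE (h u.le v.le), Subsingleton.elim _ _, Subsingleton.elim _ _⟩⟩⟩

namespace ModelStructure

variable {M : ModelStructure α} {a b c : α}

/-- `a ⟶ b` exists and is a weak equivalence. Morphisms of a preorder are unique, so a class of
morphisms is the same as a relation contained in `≤`. -/
def Weq (M : ModelStructure α) (a b : α) : Prop := ∃ i : a ⟶ b, M.weq i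

/-- `a ⟶ b` exists and is an acyclic fibration. -/
def TrivFib (M : ModelStructure α) (a b : α) : Prop := ∃ p : a ⟶ b, M.fib p ∧ M.weq p

/-- `a ⟶ b` exists and is an acyclic cofibration. -/
def TrivCof (M : ModelStructure α) (a b : α) : Prop := ∃ i : a ⟶ b, M.cof i ∧ M.weq i

/-- `e` is maximal among the targets of weak equivalences out of `e`. -/
def IsWeqMax (M : ModelStructure α) (e : α) : Prop := ∀ x, M.Weq e x → x ≤ e

theorem Weq.le (h : M.Weq a b) : a ≤ b := h.choose.le

theorem TrivFib.weq (h : M.TrivFib a b) : M.Weq a b := h.imp fun _ => And.right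

theorem TrivCof.weq (h : M.TrivCof a b) : M.Weq a b := h.imp fun _ => And.right

theorem weq_iff (i : a ⟶ b) : M.weq i ↔ M.Weq a b :=
  ⟨fun h => ⟨i, h⟩, fun ⟨j, h⟩ => Subsingleton.elim j i ▸ h⟩

theorem TrivFib.le_of_cof {x y : α} (h : M.TrivFib x y) {i : a ⟶ b} (hi : M.cof i) (hax : a ≤ x)
    (hby : b ≤ y) : b ≤ x :=
  let ⟨p, hp, hw⟩ := h
  (hasLiftingProperty_iff_of_preorder i p).1 (M.lift_cof_trivFib i p hi hp hw) hax hby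

theorem TrivCof.le_of_fib {x y : α} (h : M.TrivCof a b) {p : x ⟶ y} (hp : M.fib p) (hax : a ≤ x)
    (hby : b ≤ y) : b ≤ x :=
  let ⟨i, hi, hw⟩ := h
  (hasLiftingProperty_iff_of_preorder i p).1 (M.lift_trivCof_fib i p hi hw hp) hax hby

theorem Weq.trans (h : M.Weq a b) (h' : M.Weq b c) : M.Weq a c :=
  let ⟨_, hi⟩ := h
  let ⟨_, hj⟩ := h'
  ⟨_, M.weq_comp.comp_mem _ _ hi hj⟩

theorem TrivFib.trans (h : M.TrivFib a b) (h' : M.TrivFib b c) : M.TrivFib a c :=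
  let ⟨_, hp, hp'⟩ := h
  let ⟨_, hq, hq'⟩ := h'
  ⟨_, M.fib_comp.comp_mem _ _ hp hq, M.weq_comp.comp_mem _ _ hp' hq'⟩

theorem Weq.of_left (h : M.Weq a b) (h' : M.Weq a c) (hbc : b ≤ c) : M.Weq b c :=
  have := M.weq_two_out_of_three
  ⟨homOfLE hbc, M.weq.of_precomp h.choose _ h.choose_spec ((weq_iff _).2 h')⟩

theorem Weq.of_right (h : M.Weq b c) (h' : M.Weq a c) (hab : a ≤ b) : M.Weq a b :=
  have := M.weq_two_out_of_three
  ⟨homOfLE hab, M.weq.of_postcomp _ h.choose h.choose_spec ((weq_iff _).2 h')⟩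

theorem Weq.exists_trivCof_trivFib (h : M.Weq a b) : ∃ z, M.TrivCof a z ∧ M.TrivFib z b := by
  obtain ⟨z, i, p, hi, hp, hw, -⟩ := M.factor_cof_trivFib h.choose
  have hzb : M.TrivFib z b := ⟨p, hp, hw⟩
  exact ⟨z, ⟨i, hi, (weq_iff i).2 (hzb.weq.of_right h i.le)⟩, hzb⟩

end ModelStructure

end Preorder

section PartialOrder

variable {α : Type u} [PartialOrder α]

theorem stableUnderRetractsHom_of_partialOrder (P : MorphismProperty α) :
    StableUnderRetractsHom P := by
  rintro X Y X' Y' f g ⟨a, b, a', b', -⟩ hg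
  obtain rfl := le_antisymm a.le a'.le
  obtain rfl := le_antisymm b.le b'.le
  exact Subsingleton.elim g f ▸ hg

namespace ModelStructure

variable {M N : ModelStructure α} {a b c : α}

theorem cof_iff (i : a ⟶ b) : M.cof i ↔ ∀ x, a ≤ x → M.TrivFib x b → b ≤ x := by
  refine ⟨fun hi x hax hx => hx.le_of_cof hi hax le_rfl, fun h => ?_⟩
  obtain ⟨z, j, p, hj, hp, hw, -⟩ := M.factor_cof_trivFib i
  obtain rfl := le_antisymm p.le (h z j.le ⟨p, hp, hw⟩)
  exact Subsingleton.elim j i ▸ hj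

theorem fib_iff (p : a ⟶ b) : M.fib p ↔ ∀ y, y ≤ b → M.TrivCof a y → y ≤ a := by
  refine ⟨fun hp y hyb hy => hy.le_of_fib hp le_rfl hyb, fun h => ?_⟩
  obtain ⟨z, i, q, hi, hw, hq, -⟩ := M.factor_trivCof_fib p
  obtain rfl := le_antisymm i.le (h z q.le ⟨i, hi, hw⟩)
  exact Subsingleton.elim q p ▸ hq

theorem ext_of_weq_cof (hweq : M.weq = N.weq) (hcof : M.cof = N.cof) : M = N := by
  have hfib : M.fib = N.fib := by
    ext a b p
    simp only [fib_iff, TrivCof, hweq, hcof]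
  cases M; cases N; cases hweq; cases hfib; cases hcof; rfl

theorem TrivFib.refl (M : ModelStructure α) (a : α) : M.TrivFib a a := by
  obtain ⟨z, i, p, -, hp, hw, -⟩ := M.factor_cof_trivFib (𝟙 a)
  obtain rfl := le_antisymm i.le p.le
  exact ⟨p, hp, hw⟩

theorem TrivFib.of_le (h : M.TrivFib a b) (hac : a ≤ c) (hcb : c ≤ b) : M.TrivFib a c := by
  obtain ⟨z, i, p, hi, hp, hw, -⟩ := M.factor_cof_trivFib (homOfLE hac)
  -- The cofibration `a ⟶ z` lifts against the acyclic fibration `a ⟶ b`, which forces `z = a`.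
  obtain rfl := le_antisymm i.le (h.le_of_cof hi le_rfl (p.le.trans hcb))
  exact ⟨p, hp, hw⟩

theorem TrivCof.of_le (h : M.TrivCof a b) (hac : a ≤ c) (hcb : c ≤ b) : M.TrivCof c b := by
  obtain ⟨z, i, p, hi, hw, hp, -⟩ := M.factor_trivCof_fib (homOfLE hcb)
  obtain rfl := le_antisymm p.le (h.le_of_fib hp (hac.trans i.le) le_rfl)
  exact ⟨i, hi, hw⟩

theorem exists_weq_isWeqMax [Finite α] (M : ModelStructure α) (a : α) :
    ∃ e, M.Weq a e ∧ M.IsWeqMax e := by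
  obtain ⟨e, he, hmax⟩ := (Set.toFinite {e | M.Weq a e}).exists_maximal
    ⟨a, (TrivFib.refl M a).weq⟩
  exact ⟨e, he, fun x hx => hmax (he.trans hx) hx.le⟩

end ModelStructure

end PartialOrder

namespace ModelStructure

variable {α : Type u} [LinearOrder α] {M : ModelStructure α} {a b c e : α}

theorem Weq.of_le (h : M.Weq a b) (hac : a ≤ c) (hcb : c ≤ b) : M.Weq a c := by
  obtain ⟨z, haz, hzb⟩ := h.exists_trivCof_trivFib
  rcases le_total c z with hcz | hzc
  · exact (haz.of_le hac hcz).weq.of_right haz.weq hac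
  · exact haz.weq.trans (hzb.of_le hzc hcb).weq

theorem Weq.le_of_isWeqMax (h : M.Weq a b) (he : M.IsWeqMax e) (hae : a ≤ e) : b ≤ e := by
  by_contra! heb
  exact heb.not_ge (he b ((h.of_le hae heb.le).of_left h heb.le))

variable [Finite α]

theorem weq_iff_forall_isWeqMax (hab : a ≤ b) :
    M.Weq a b ↔ ∀ e, M.IsWeqMax e → a ≤ e → b ≤ e := by
  refine ⟨fun h e he => h.le_of_isWeqMax he, fun h => ?_⟩
  obtain ⟨e, hae, he⟩ := M.exists_weq_isWeqMax a
  exact hae.of_le hab (h e he hae.le)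

theorem exists_trivFib_iff_le (M : ModelStructure α) (a : α) :
    ∃ m, ∀ b, M.TrivFib a b ↔ a ≤ b ∧ b ≤ m := by
  obtain ⟨m, hm, hmax⟩ := (Set.toFinite {m | M.TrivFib a m}).exists_maximal ⟨a, TrivFib.refl M a⟩
  refine ⟨m, fun b => ⟨fun h => ⟨h.weq.le, ?_⟩, fun h => hm.of_le h.1 h.2⟩⟩
  exact (le_total b m).elim id (hmax h)

end ModelStructure

/-- The data classifying the model structures on a finite linear order: `reach a` is the largest `b`
such that `a ⟶ b` is an acyclic fibration, and `ends` is the set of largest elements of the weak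
equivalence classes. -/
@[ext]
structure ModelCode (α : Type u) [LinearOrder α] where
  reach : α → α
  ends : Finset α
  le_reach : ∀ a, a ≤ reach a
  reach_le_reach : ∀ {a b}, a ≤ b → b ≤ reach a → reach b ≤ reach a
  reach_le_of_mem_ends : ∀ {a e}, e ∈ ends → a ≤ e → reach a ≤ e
  exists_mem_ends_ge : ∀ a, ∃ e ∈ ends, a ≤ e

namespace ModelCode

section Classification

variable {α : Type u} [LinearOrder α] (c : ModelCode α)

/-- `a ⟶ b` is a weak equivalence of the model structure encoded by `c`, provided that `a ≤ b`:
no end separates `a` from `b`. -/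
def Weq (a b : α) : Prop := ∀ e ∈ c.ends, a ≤ e → b ≤ e

/-- `a ⟶ b` is a cofibration of the model structure encoded by `c`, provided that `a ≤ b`. Acyclic
fibrations are stable under pullback, so lifting need only be tested against those with target
`b`. -/
def Cof (a b : α) : Prop := ∀ x, a ≤ x → b ≤ c.reach x → b ≤ x

/-- `a ⟶ b` is a fibration of the model structure encoded by `c`, provided that `a ≤ b`. Acyclic
cofibrations are stable under pushout, so lifting need only be tested against those with source
`a`. -/
def Fib (a b : α) : Prop := ∀ y, y ≤ b → c.Weq a y → c.Cof a y → y ≤ a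

theorem exists_isLeast_ends (a : α) : ∃ e, IsLeast {e | e ∈ c.ends ∧ a ≤ e} e := by
  have hne : {e ∈ c.ends | a ≤ e}.Nonempty := by
    obtain ⟨e, he, hae⟩ := c.exists_mem_ends_ge a
    exact ⟨e, Finset.mem_filter.2 ⟨he, hae⟩⟩
  exact ⟨_, by simpa using Finset.isLeast_min' _ hne⟩

variable {c} {a b d : α}

theorem mem_ends_iff {e : α} : e ∈ c.ends ↔ ∀ a, e ≤ a → c.Weq e a → a = e := by
  refine ⟨fun he a hea h => (h e he le_rfl).antisymm hea, fun h => ?_⟩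
  obtain ⟨a, ⟨ha, hea⟩, hmin⟩ := c.exists_isLeast_ends e
  exact h a hea (fun d hd hed => hmin ⟨hd, hed⟩) ▸ ha

theorem Weq.trans (h : c.Weq a b) (h' : c.Weq b d) : c.Weq a d :=
  fun e he hae => h' e he (h e he hae)

theorem Weq.mono_left (h : c.Weq a b) (had : a ≤ d) : c.Weq d b :=
  fun e he hde => h e he (had.trans hde)

theorem Cof.mono_left (h : c.Cof a b) (had : a ≤ d) : c.Cof d b :=
  fun x hdx => h x (had.trans hdx)

theorem Cof.trans (h : c.Cof a b) (h' : c.Cof b d) (hbd : b ≤ d) : c.Cof a d :=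
  fun x hax hdx => h' x (h x hax (hbd.trans hdx)) hdx

theorem Fib.trans (h : c.Fib a b) (h' : c.Fib b d) (hab : a ≤ b) : c.Fib a d :=
  fun y hyd hw hc => h y (h' y hyd (hw.mono_left hab) (hc.mono_left hab)) hw hc

variable [Finite α]

theorem Cof.exists_factor (c : ModelCode α) (hab : a ≤ b) :
    ∃ z, a ≤ z ∧ z ≤ b ∧ c.Cof a z ∧ b ≤ c.reach z := by
  obtain ⟨z, ⟨haz, hzb, hbz⟩, hmin⟩ :=
    (Set.toFinite {z | a ≤ z ∧ z ≤ b ∧ b ≤ c.reach z}).exists_minimal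
      ⟨b, hab, le_rfl, c.le_reach b⟩
  refine ⟨z, haz, hzb, fun x hax hzx => ?_, hbz⟩
  by_contra! hxz
  exact hxz.not_ge
    (hmin ⟨hax, hxz.le.trans hzb, hbz.trans (c.reach_le_reach hxz.le hzx)⟩ hxz.le)

theorem Fib.exists_factor (c : ModelCode α) (hab : a ≤ b) :
    ∃ z, a ≤ z ∧ z ≤ b ∧ c.Cof a z ∧ c.Weq a z ∧ c.Fib z b := by
  obtain ⟨z, ⟨haz, hzb, hc, hw⟩, hmax⟩ :=
    (Set.toFinite {z | a ≤ z ∧ z ≤ b ∧ c.Cof a z ∧ c.Weq a z}).exists_maximal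
      ⟨a, le_rfl, hab, fun _ h _ => h, fun _ _ h => h⟩
  refine ⟨z, haz, hzb, hc, hw, fun y hyb hwy hcy => ?_⟩
  by_contra! hzy
  exact hzy.not_ge
    (hmax ⟨haz.trans hzy.le, hyb, hc.trans hcy hzy.le, hw.trans hwy⟩ hzy.le)

theorem fib_and_weq_iff (hab : a ≤ b) :
    c.Fib a b ∧ c.Weq a b ↔ b ≤ c.reach a := by
  constructor
  · rintro ⟨hf, hw⟩
    obtain ⟨z, haz, hzb, hc, hz⟩ := Cof.exists_factor c hab
    have hwz : c.Weq a z := fun e he hae => hzb.trans (hw e he hae)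
    exact le_antisymm (hf z hzb hwz hc) haz ▸ hz
  · exact fun hb => ⟨fun y hyb _ hc => hc a le_rfl (hyb.trans hb),
      fun e he hae => hb.trans (c.reach_le_of_mem_ends he hae)⟩

/-- The model structure encoded by `c`. By `fib_and_weq_iff`, the morphism `a ⟶ b` is an acyclic
fibration of it iff `b ≤ c.reach a`. -/
def toModelStructure (c : ModelCode α) : ModelStructure α where
  weq a b _ := c.Weq a b
  fib a b _ := c.Fib a b
  cof a b _ := c.Cof a b
  weq_comp := ⟨fun _ _ hi hj => hi.trans hj⟩
  fib_comp := ⟨fun i _ hi hj => hi.trans hj i.le⟩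
  cof_comp := ⟨fun _ j hi hj => hi.trans hj j.le⟩
  weq_retract := stableUnderRetractsHom_of_partialOrder _
  fib_retract := stableUnderRetractsHom_of_partialOrder _
  cof_retract := stableUnderRetractsHom_of_partialOrder _
  weq_two_out_of_three :=
    { comp_mem := fun _ _ hi hj => hi.trans hj
      of_postcomp := fun _ j _ hij e he hae => j.le.trans (hij e he hae)
      of_precomp := fun i _ _ hij => hij.mono_left i.le }
  lift_cof_trivFib _ _ x _ i p hi hp hw := (hasLiftingProperty_iff_of_preorder i p).2
    fun hax hby => hi x hax (hby.trans ((fib_and_weq_iff p.le).1 ⟨hp, hw⟩))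
  lift_trivCof_fib _ _ _ _ i p hi hw hp :=
    (hasLiftingProperty_iff_of_preorder i p).2 fun hax hby =>
      hp _ hby (hw.mono_left hax) (hi.mono_left hax)
  factor_cof_trivFib _ _ f := by
    obtain ⟨z, haz, hzb, hc, hz⟩ := Cof.exists_factor c f.le
    obtain ⟨hf, hw⟩ := (fib_and_weq_iff hzb).2 hz
    exact ⟨z, homOfLE haz, homOfLE hzb, hc, hf, hw, Subsingleton.elim _ _⟩
  factor_trivCof_fib _ _ f := by
    obtain ⟨z, haz, hzb, hc, hw, hf⟩ := Fib.exists_factor c f.le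
    exact ⟨z, homOfLE haz, homOfLE hzb, hc, hw, hf, Subsingleton.elim _ _⟩

theorem toModelStructure_injective :
    Function.Injective (toModelStructure : ModelCode α → ModelStructure α) := by
  intro c d h
  have hweq {a b : α} (hab : a ≤ b) : c.Weq a b ↔ d.Weq a b :=
    iff_of_eq (congrArg (fun M : ModelStructure α => M.weq (homOfLE hab)) h)
  have hfib {a b : α} (hab : a ≤ b) : c.Fib a b ↔ d.Fib a b :=
    iff_of_eq (congrArg (fun M : ModelStructure α => M.fib (homOfLE hab)) h)
  have hreach {a b : α} (hab : a ≤ b) : b ≤ c.reach a ↔ b ≤ d.reach a := by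
    rw [← fib_and_weq_iff hab, ← fib_and_weq_iff hab, hweq hab, hfib hab]
  refine ModelCode.ext (funext fun a => ?_) (Finset.ext fun e => ?_)
  · exact le_antisymm ((hreach (c.le_reach a)).1 le_rfl) ((hreach (d.le_reach a)).2 le_rfl)
  · rw [mem_ends_iff, mem_ends_iff]
    exact forall₂_congr fun a hea => by rw [hweq hea]

theorem toModelStructure_surjective :
    Function.Surjective (toModelStructure : ModelCode α → ModelStructure α) := by
  intro M
  choose f hf using M.exists_trivFib_iff_le
  have htriv (a : α) : M.TrivFib a (f a) :=
    (hf a _).2 ⟨((hf a a).1 (.refl M a)).2, le_rfl⟩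
  let c : ModelCode α :=
    { reach := f
      ends := (Set.toFinite {e | M.IsWeqMax e}).toFinset
      le_reach a := (htriv a).weq.le
      reach_le_reach {a b} hab hba :=
        ((hf a _).1 (((hf a b).2 ⟨hab, hba⟩).trans (htriv b))).2
      reach_le_of_mem_ends {a e} he := (htriv a).weq.le_of_isWeqMax (by simpa using he)
      exists_mem_ends_ge a := by
        obtain ⟨e, hae, he⟩ := M.exists_weq_isWeqMax a
        exact ⟨e, by simpa using he, hae.le⟩ }
  refine ⟨c, ModelStructure.ext_of_weq_cof ?_ ?_⟩
  · ext a b i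
    rw [ModelStructure.weq_iff (M := M), ModelStructure.weq_iff_forall_isWeqMax i.le]
    simp [toModelStructure, Weq, c]
  · ext a b i
    rw [ModelStructure.cof_iff (M := M)]
    refine forall₂_congr fun x _ => ?_
    rw [hf]
    exact ⟨fun h hb => h hb.2, fun h hb => (le_total b x).elim id fun hxb => h ⟨hxb, hb⟩⟩

/-- The classification of the model structures on a finite linear order by their codes. -/
noncomputable def equivModelStructure : ModelCode α ≃ ModelStructure α :=
  Equiv.ofBijective toModelStructure ⟨toModelStructure_injective, toModelStructure_surjective⟩

theorem nonempty_localization_equivalence (c : ModelCode α) :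
    Nonempty (c.toModelStructure.weq.Localization ≌ {e // e ∈ c.ends}) := by
  choose q hq using c.exists_isLeast_ends
  have gc : GaloisConnection (fun a => (⟨q a, (hq a).1.1⟩ : {e // e ∈ c.ends})) Subtype.val :=
    fun a e => ⟨(hq a).1.2.trans, fun hae => (hq a).2 ⟨e.2, hae⟩⟩
  have : gc.monotone_u.functor.Full := ⟨fun i => ⟨homOfLE i.le, Subsingleton.elim _ _⟩⟩
  have : gc.monotone_u.functor.Faithful := ⟨fun _ => Subsingleton.elim _ _⟩
  have hweq : (MorphismProperty.isomorphisms {e // e ∈ c.ends}).inverseImage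
      gc.monotone_l.functor = c.toModelStructure.weq := by
    ext a b i
    rw [MorphismProperty.inverseImage_iff, MorphismProperty.isomorphisms.iff]
    constructor
    · intro _ e he hae
      have hqba : q b ≤ q a := (inv (gc.monotone_l.functor.map i)).le
      exact (hq b).1.2.trans (hqba.trans ((hq a).2 ⟨he, hae⟩))
    · intro hab
      have hqba : q b ≤ q a := (hq b).2 ⟨(hq a).1.1, hab _ (hq a).1.1 (hq a).1.2⟩
      exact ⟨homOfLE hqba, Subsingleton.elim _ _, Subsingleton.elim _ _⟩
  have hloc := gc.adjunction.isLocalization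
  rw [hweq] at hloc
  exact ⟨Localization.uniq c.toModelStructure.weq.Q gc.monotone_l.functor
    c.toModelStructure.weq⟩

theorem nonempty_localization_equivalence_fin_iff (c : ModelCode α) (j : ℕ) :
    Nonempty (c.toModelStructure.weq.Localization ≌ Fin j) ↔ c.ends.card = j := by
  obtain ⟨e⟩ := c.nonempty_localization_equivalence
  constructor
  · rintro ⟨e'⟩
    simpa using Fintype.card_congr (e.symm.trans e').toOrderIso.toEquiv
  · exact fun hj => ⟨e.trans (c.ends.orderIsoOfFin hj).symm.equivalence⟩

end Classification

end ModelCode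

/-- Shapiro's Catalan triangle, with an additional row and column of index `0`. -/
def catalanTriangle : ℕ → ℕ → ℕ
  | 0, 0 => 1
  | 0, _ + 1 => 0
  | _ + 1, 0 => 0
  | m + 1, j + 1 =>
    catalanTriangle m j + 2 * catalanTriangle m (j + 1) + catalanTriangle m (j + 2)

theorem catalanTriangle_add_choose (n k : ℕ) :
    catalanTriangle (n + 1) (k + 1) + (2 * n + 1).choose (n + k + 2) =
      (2 * n + 1).choose (n + k + 1) := by
  have pascal (N r : ℕ) : (N + 2).choose (r + 2) =
      N.choose r + 2 * N.choose (r + 1) + N.choose (r + 2) := by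
    simp only [Nat.choose_succ_succ]; ring
  induction n generalizing k with
  | zero => cases k <;> simp [catalanTriangle, Nat.choose_eq_zero_of_lt]
  | succ n ih =>
    have hpred : catalanTriangle (n + 1) k + (2 * n + 1).choose (n + k + 1) =
        (2 * n + 1).choose (n + k) := by
      cases k with
      | zero => simpa [catalanTriangle] using Nat.choose_symm_half n
      | succ k => exact ih k
    have hk := ih k
    have hsucc := ih (k + 1)
    rw [catalanTriangle, show 2 * (n + 1) + 1 = 2 * n + 1 + 2 by ring,
      show n + 1 + k + 2 = n + k + 1 + 2 by ring, show n + 1 + k + 1 = n + k + 2 by ring,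
      pascal, pascal]
    simp only [Nat.add_assoc, Nat.reduceAdd] at hpred hk hsucc ⊢
    omega

theorem mul_catalanTriangle {n k : ℕ} (hk : k ≤ n) :
    (n + k + 2) * catalanTriangle (n + 1) (k + 1) =
      2 * (k + 1) * (2 * n + 1).choose (n - k) := by
  have hadd := catalanTriangle_add_choose n k
  have hratio : (2 * n + 1).choose (n + k + 2) * (n + k + 2) =
      (2 * n + 1).choose (n + k + 1) * (n - k) := by
    rw [Nat.choose_succ_right_eq, show 2 * n + 1 - (n + k + 1) = n - k by omega]
  rw [← Nat.choose_symm_of_eq_add (show 2 * n + 1 = n + k + 1 + (n - k) by omega)]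
  refine Nat.add_right_cancel (m := (2 * n + 1).choose (n + k + 1) * (n - k)) ?_
  calc (n + k + 2) * catalanTriangle (n + 1) (k + 1) + (2 * n + 1).choose (n + k + 1) * (n - k)
    _ = (n + k + 2) * (2 * n + 1).choose (n + k + 1) := by rw [← hratio, ← hadd]; ring
    _ = (2 * (k + 1) + (n - k)) * (2 * n + 1).choose (n + k + 1) := by congr 1; omega
    _ = 2 * (k + 1) * (2 * n + 1).choose (n + k + 1) +
        (2 * n + 1).choose (n + k + 1) * (n - k) := by ring

theorem card_subtype_add_toNat {β : Type*} [Finite β] (w : β → ℕ) (j : ℕ) :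
    Nat.card {x : β × Bool // w x.1 + x.2.toNat = j + 1} =
      Nat.card {b // w b = j} + Nat.card {b // w b = j + 1} := by
  have := Fintype.ofFinite β
  simp only [Nat.card_eq_fintype_card, Fintype.card_subtype, Finset.card_filter,
    Fintype.sum_prod_type, Fintype.sum_bool, Finset.sum_add_distrib, Bool.toNat_true,
    Bool.toNat_false, Nat.add_right_cancel_iff, Nat.add_zero]

theorem exists_fin_succ_eq_of_succ_le {m : ℕ} {a : Fin m} {b : Fin (m + 1)} (h : a.succ ≤ b) :
    ∃ c : Fin m, c.succ = b :=
  Fin.exists_succ_eq_of_ne_zero (Fin.pos_iff_ne_zero.1 (a.succ_pos.trans_le h))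

namespace ModelCode

instance {α : Type u} [LinearOrder α] [Finite α] : Finite (ModelCode α) :=
  Finite.of_injective (fun c : ModelCode α => (c.reach, c.ends)) fun _ _ h =>
    ModelCode.ext (Prod.ext_iff.1 h).1 (Prod.ext_iff.1 h).2

section Counting

variable {m : ℕ}

theorem reach_succ_ne_zero (c : ModelCode (Fin (m + 1))) (a : Fin m) : c.reach a.succ ≠ 0 :=
  Fin.pos_iff_ne_zero.1 (a.succ_pos.trans_le (c.le_reach a.succ))

/-- Deletion of the bottom element. The reach of `0`, unless it is `0` itself, is kept as an end:
this retains the condition it imposes on the reach of the other elements. -/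
def tail (c : ModelCode (Fin (m + 1))) : ModelCode (Fin m) where
  reach a := (c.reach a.succ).pred (c.reach_succ_ne_zero a)
  ends := {a | a.succ = c.reach 0 ∨ a.succ ∈ c.ends}
  le_reach a := (Fin.le_pred_iff _).2 (c.le_reach a.succ)
  reach_le_reach hab hba := Fin.pred_le_pred_iff.2
    (c.reach_le_reach (Fin.succ_le_succ_iff.2 hab) ((Fin.le_pred_iff _).1 hba))
  reach_le_of_mem_ends {a e} he hae := by
    rw [Fin.pred_le_iff]
    rcases (Finset.mem_filter_univ _).1 he with he | he
    · exact he ▸ c.reach_le_reach (Fin.zero_le _) (he ▸ Fin.succ_le_succ_iff.2 hae)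
    · exact c.reach_le_of_mem_ends he (Fin.succ_le_succ_iff.2 hae)
  exists_mem_ends_ge a := by
    obtain ⟨e, he, hae⟩ := c.exists_mem_ends_ge a.succ
    obtain ⟨e, rfl⟩ := exists_fin_succ_eq_of_succ_le hae
    exact ⟨e, by simp [he], Fin.succ_le_succ_iff.1 hae⟩

theorem succ_reach_tail (c : ModelCode (Fin (m + 1))) (a : Fin m) :
    (c.tail.reach a).succ = c.reach a.succ :=
  Fin.succ_pred _ (c.reach_succ_ne_zero a)

/-- The ends together with the reach of the bottom element. -/
def cuts (c : ModelCode (Fin (m + 1))) : Finset (Fin (m + 1)) :=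
  insert (c.reach 0) c.ends

theorem isLeast_cuts (c : ModelCode (Fin (m + 1))) :
    IsLeast (c.cuts : Set (Fin (m + 1))) (c.reach 0) := by
  refine ⟨by simp [cuts], fun e he => ?_⟩
  rcases Finset.mem_insert.1 he with rfl | he
  · exact le_rfl
  · exact c.reach_le_of_mem_ends he (Fin.zero_le e)

/-- The set `E` moved up by one place, with a new bottom element adjoined if `s` holds. -/
def shift (E : Finset (Fin m)) (s : Bool) : Finset (Fin (m + 1)) :=
  if s then insert 0 (E.map (Fin.succEmb m)) else E.map (Fin.succEmb m)

theorem succ_mem_shift {E : Finset (Fin m)} {s : Bool} {a : Fin m} :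
    a.succ ∈ shift E s ↔ a ∈ E := by
  cases s <;> simp [shift]

theorem zero_mem_shift {E : Finset (Fin m)} {s : Bool} : 0 ∈ shift E s ↔ s = true := by
  cases s <;> simp [shift]

theorem card_shift (E : Finset (Fin m)) (s : Bool) : (shift E s).card = E.card + s.toNat := by
  cases s <;> simp [shift]

theorem cuts_eq_shift (c : ModelCode (Fin (m + 1))) :
    c.cuts = shift c.tail.ends (decide (c.reach 0 = 0)) := by
  ext a
  cases a using Fin.cases with
  | zero =>
    rw [zero_mem_shift, decide_eq_true_iff]
    exact ⟨fun h => Fin.le_zero_iff.1 (c.isLeast_cuts.2 h), fun h => h ▸ c.isLeast_cuts.1⟩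
  | succ a => simp [succ_mem_shift, cuts, tail]

theorem ends_eq_ite (c : ModelCode (Fin (m + 1))) :
    c.ends = if c.reach 0 ∈ c.ends then c.cuts else c.cuts.erase (c.reach 0) := by
  split_ifs with h <;> simp [cuts, h]

/-- The deletion of the bottom element together with two bits: whether the reach of `0` is `0`, and
whether it is an end. -/
def decompose (c : ModelCode (Fin (m + 1))) : (ModelCode (Fin m) × Bool) × Bool :=
  ((c.tail, decide (c.reach 0 = 0)), decide (c.reach 0 ∈ c.ends))

theorem card_ends_add_one (c : ModelCode (Fin (m + 1))) :
    c.ends.card + 1 = c.decompose.1.1.ends.card + c.decompose.1.2.toNat + c.decompose.2.toNat := by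
  have hcuts : c.cuts.card = c.tail.ends.card + (decide (c.reach 0 = 0)).toNat := by
    rw [cuts_eq_shift, card_shift]
  simp only [decompose, ← hcuts]
  by_cases h : c.reach 0 ∈ c.ends <;> simp [cuts, h]

theorem decompose_injective : Function.Injective (decompose (m := m)) := by
  intro c d h
  simp only [decompose, Prod.mk.injEq, decide_eq_decide] at h
  obtain ⟨⟨htail, hzero⟩, hmem⟩ := h
  have hcuts : c.cuts = d.cuts := by simp only [cuts_eq_shift, htail, hzero]
  have hreach : c.reach 0 = d.reach 0 := c.isLeast_cuts.unique (hcuts ▸ d.isLeast_cuts)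
  refine ModelCode.ext (funext fun a => ?_) ?_
  · cases a using Fin.cases with
    | zero => exact hreach
    | succ a => rw [← succ_reach_tail, htail, succ_reach_tail]
  · rw [ends_eq_ite c, ends_eq_ite d, if_congr hmem rfl rfl, hcuts, hreach]

/-- The code with tail `c`, ends `E` and reach `r` at the new bottom element. -/
def cons (c : ModelCode (Fin m)) (r : Fin (m + 1)) (E : Finset (Fin (m + 1)))
    (hr : ∀ e ∈ E, r ≤ e) (hE : E.Nonempty)
    (hends : ∀ a : Fin m, a.succ = r ∨ a.succ ∈ E ↔ a ∈ c.ends) : ModelCode (Fin (m + 1)) where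
  reach := Fin.cons r fun a => (c.reach a).succ
  ends := E
  le_reach a := by
    cases a using Fin.cases <;> simp [c.le_reach]
  reach_le_reach {a b} hab hba := by
    cases b using Fin.cases with
    | zero => simp [Fin.le_zero_iff.1 hab]
    | succ b =>
      cases a using Fin.cases with
      | zero =>
        rw [Fin.cons_zero] at hba ⊢
        obtain ⟨e, rfl⟩ := exists_fin_succ_eq_of_succ_le hba
        exact Fin.succ_le_succ_iff.2
          (c.reach_le_of_mem_ends ((hends e).1 (.inl rfl)) (Fin.succ_le_succ_iff.1 hba))
      | succ a =>
        simp only [Fin.cons_succ, Fin.succ_le_succ_iff] at *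
        exact c.reach_le_reach hab hba
  reach_le_of_mem_ends {a e} he hae := by
    cases a using Fin.cases with
    | zero => exact hr e he
    | succ a =>
      obtain ⟨e, rfl⟩ := exists_fin_succ_eq_of_succ_le hae
      simp only [Fin.cons_succ, Fin.succ_le_succ_iff] at *
      exact c.reach_le_of_mem_ends ((hends e).1 (.inr he)) hae
  exists_mem_ends_ge a := by
    obtain ⟨x, hx⟩ := hE
    cases a using Fin.cases with
    | zero => exact ⟨x, hx, Fin.zero_le x⟩
    | succ a =>
      obtain ⟨e, he, hae⟩ := c.exists_mem_ends_ge a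
      rcases (hends e).2 he with rfl | he
      · exact ⟨x, hx, (Fin.succ_le_succ_iff.2 hae).trans (hr x hx)⟩
      · exact ⟨e.succ, he, Fin.succ_le_succ_iff.2 hae⟩

theorem tail_cons (c : ModelCode (Fin m)) {r : Fin (m + 1)} {E : Finset (Fin (m + 1))}
    (hr : ∀ e ∈ E, r ≤ e) (hE : E.Nonempty)
    (hends : ∀ a : Fin m, a.succ = r ∨ a.succ ∈ E ↔ a ∈ c.ends) :
    (c.cons r E hr hE hends).tail = c := by
  ext a
  · simp [tail, cons]
  · simp [tail, cons, hends]

theorem exists_decompose_eq (c : ModelCode (Fin m)) (s t : Bool)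
    (h : 1 < c.ends.card + s.toNat + t.toNat) :
    ∃ d : ModelCode (Fin (m + 1)), d.decompose = ((c, s), t) := by
  set F := shift c.ends s with hF
  rw [← card_shift, ← hF] at h
  have hFne : F.Nonempty := Finset.card_pos.1 (by have := t.toNat_le; omega)
  obtain ⟨r, hrF, hr⟩ : ∃ r, IsLeast (F : Set (Fin (m + 1))) r := ⟨_, F.isLeast_min' hFne⟩
  obtain ⟨E, hEF, hE, hrE⟩ : ∃ E, insert r E = F ∧ E.Nonempty ∧ (r ∈ E ↔ t = true) := by
    cases t with
    | true => exact ⟨F, Finset.insert_eq_of_mem hrF, hFne, by simpa using hrF⟩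
    | false =>
      refine ⟨F.erase r, Finset.insert_erase hrF, Finset.card_pos.1 ?_, by simp⟩
      rw [Finset.card_erase_of_mem hrF]
      exact Nat.sub_pos_of_lt h
  have hends (a : Fin m) : a.succ = r ∨ a.succ ∈ E ↔ a ∈ c.ends := by
    rw [← Finset.mem_insert, hEF, succ_mem_shift]
  have hr0 : r = 0 ↔ s = true := by
    rw [← zero_mem_shift (E := c.ends), ← hF]
    exact ⟨fun h0 => h0 ▸ hrF, fun h0 => Fin.le_zero_iff.1 (hr h0)⟩
  refine ⟨c.cons r E (fun e he => hr (hEF ▸ Finset.mem_insert_of_mem he)) hE hends, ?_⟩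
  simp only [decompose, tail_cons, Prod.mk.injEq, true_and]
  simp only [cons, Fin.cons_zero, hr0, hrE, Bool.decide_eq_true, and_self]

/-- The codes of model structures on an `m`-element order with `j` weak equivalence classes. -/
abbrev WithEnds (m j : ℕ) : Type := {c : ModelCode (Fin m) // c.ends.card = j}

theorem card_withEnds_succ_succ (m j : ℕ) :
    Nat.card (WithEnds (m + 1) (j + 1)) = Nat.card (WithEnds m j) +
      2 * Nat.card (WithEnds m (j + 1)) + Nat.card (WithEnds m (j + 2)) := by
  let e : WithEnds (m + 1) (j + 1) ≃ {x : (ModelCode (Fin m) × Bool) × Bool //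
      x.1.1.ends.card + x.1.2.toNat + x.2.toNat = j + 1 + 1} :=
    Equiv.ofBijective
      (Subtype.map decompose fun c hc => by rw [← card_ends_add_one, hc])
      ⟨Subtype.map_injective _ decompose_injective, fun ⟨((c, s), t), hx⟩ => by
        dsimp only at hx
        obtain ⟨d, hd⟩ := exists_decompose_eq c s t (by omega)
        refine ⟨⟨d, ?_⟩, Subtype.ext hd⟩
        have hcard := d.card_ends_add_one
        rw [hd, hx] at hcard
        exact Nat.succ_injective hcard⟩
  rw [Nat.card_congr e,
    card_subtype_add_toNat fun x : ModelCode (Fin m) × Bool => x.1.ends.card + x.2.toNat,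
    card_subtype_add_toNat fun c : ModelCode (Fin m) => c.ends.card,
    card_subtype_add_toNat fun c : ModelCode (Fin m) => c.ends.card]
  ring

theorem card_withEnds (m j : ℕ) : Nat.card (WithEnds m j) = catalanTriangle m j := by
  induction m generalizing j with
  | zero =>
    have : Unique (ModelCode (Fin 0)) :=
      { default :=
          { reach := id
            ends := ∅
            le_reach := fun a => a.elim0
            reach_le_reach := fun {a} => a.elim0
            reach_le_of_mem_ends := fun {a} => a.elim0
            exists_mem_ends_ge := fun a => a.elim0 }
        uniq := fun c => ModelCode.ext (Subsingleton.elim _ _) (Subsingleton.elim _ _) }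
    have hends (c : ModelCode (Fin 0)) : c.ends = ∅ := Subsingleton.elim _ _
    cases j <;> simp [WithEnds, hends, catalanTriangle]
  | succ m ih =>
    cases j with
    | zero =>
      refine @Nat.card_of_isEmpty _ ⟨fun ⟨c, hc⟩ => ?_⟩
      obtain ⟨e, he, -⟩ := c.exists_mem_ends_ge 0
      simp [Finset.card_eq_zero.1 hc] at he
    | succ j => rw [card_withEnds_succ_succ, ih, ih, ih, catalanTriangle]

end Counting

end ModelCode

/-- For `0 ≤ k ≤ n`, if `N` is the number of model structures on `[n]` whose
homotopy category (the localization at the weak equivalences) is equivalent to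
`[k]`, then `(n + k + 2) * N = 2 * (k + 1) * C(2n+1, n-k)`. -/
theorem card_model_structures_with_homotopy_category (n k : ℕ) (hk : k ≤ n) :
    (n + k + 2) *
      Nat.card {M : ModelStructure (Fin (n + 1)) //
        Nonempty (M.weq.Localization ≌ Fin (k + 1))} =
      2 * (k + 1) * Nat.choose (2 * n + 1) (n - k) := by
  rw [← mul_catalanTriangle hk, ← ModelCode.card_withEnds]
  congr 1
  exact Nat.card_congr (ModelCode.equivModelStructure.subtypeEquiv fun c =>
    (c.nonempty_localization_equivalence_fin_iff (k + 1)).symm).symm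
end
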